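/- arXiv:1603.07628 — 2 statements merged into one kernel-verified Lean document; each statement's English description precedes it below -/
import Mathlib

section
/- (Proposition 9, refined bound on the derivative of the MMSE.) For every n ≥ 1, every random vector X in ℝⁿ with E[‖X‖²] < ∞, and every snr > 0, (1/n)·Tr(E[(Cov(X|Y_snr))²]) ≤ (1/(n·snr²))·( Tr(E[(E[Z Zᵀ|Y_snr])²]) − Tr((Iₙ − snr·E[Cov(X|Y_snr)])²) ). -/
open MeasureTheory ProbabilityTheory Real Matrix

noncomputable section

/-- The observation `Y_snr = √snr · X + Z` as a random vector in `ℝⁿ` (modeled as `Fin n → ℝ`). -/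
def obs {Ω : Type*} {n : ℕ} (X Z : Ω → Fin n → ℝ) (snr : ℝ) : Ω → Fin n → ℝ :=
  fun ω i => Real.sqrt snr * X ω i + Z ω i

/-- The σ-algebra generated by the observation `Y_snr`. -/
def obsSigma {Ω : Type*} [MeasurableSpace Ω] {n : ℕ} (X Z : Ω → Fin n → ℝ) (snr : ℝ) :
    MeasurableSpace Ω :=
  MeasurableSpace.comap (obs X Z snr) inferInstance

/-- Componentwise conditional expectation of a random vector given a sub-σ-algebra `m`. -/
def ceVec {Ω : Type*} {n : ℕ} (m : MeasurableSpace Ω) [MeasurableSpace Ω] (μ : Measure Ω)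
    (V : Ω → Fin n → ℝ) : Ω → Fin n → ℝ :=
  fun ω i => (μ[fun ω' => V ω' i | m]) ω

/-- Entrywise conditional expectation of a random matrix given a sub-σ-algebra `m`. -/
def ceMat {Ω : Type*} {n : ℕ} (m : MeasurableSpace Ω) [MeasurableSpace Ω] (μ : Measure Ω)
    (M : Ω → Matrix (Fin n) (Fin n) ℝ) : Ω → Matrix (Fin n) (Fin n) ℝ :=
  fun ω => Matrix.of fun i j => (μ[fun ω' => M ω' i j | m]) ω

/-- Conditional covariance matrix `Cov(V|m) = E[V Vᵀ|m] − E[V|m]·E[V|m]ᵀ` (entrywise). -/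
def covMat {Ω : Type*} {n : ℕ} (m : MeasurableSpace Ω) [MeasurableSpace Ω] (μ : Measure Ω)
    (V : Ω → Fin n → ℝ) : Ω → Matrix (Fin n) (Fin n) ℝ :=
  fun ω => ceMat m μ (fun ω' => Matrix.vecMulVec (V ω') (V ω')) ω
    - Matrix.vecMulVec (ceVec m μ V ω) (ceVec m μ V ω)

/-- Entrywise expectation of a random matrix. -/
def expMat {Ω : Type*} [MeasurableSpace Ω] {n : ℕ} (μ : Measure Ω)
    (M : Ω → Matrix (Fin n) (Fin n) ℝ) : Matrix (Fin n) (Fin n) ℝ :=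
  Matrix.of fun i j => ∫ ω, M ω i j ∂μ

/-- `Tr(E[M])` for a random matrix `M` (expectation entrywise). -/
def trExp {Ω : Type*} [MeasurableSpace Ω] {n : ℕ} (μ : Measure Ω)
    (M : Ω → Matrix (Fin n) (Fin n) ℝ) : ℝ :=
  Matrix.trace (expMat μ M)

/-!
As `Z = Y - √snr X` with `Y` known, `Cov(Z|Y) = snr Cov(X|Y)`. Write `E[ZZᵀ|Y] = C + P` with
`C = Cov(Z|Y)` and `P = E[Z|Y] E[Z|Y]ᵀ`. Both are positive semidefinite, so `Tr(CP) ≥ 0` and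
`Tr((C + P)²) ≥ Tr(C²) + Tr(P²)`. In expectation, Jensen's inequality gives
`Tr(E[P²]) ≥ Tr((E[P])²)`, where `E[P] = E[ZZᵀ] - E[C] = I - snr E[Cov(X|Y)]`.
-/

section Trace

variable {ι 𝕜 : Type*} [Fintype ι] [RCLike 𝕜]

open scoped ComplexOrder MatrixOrder in
theorem trace_mul_nonneg_of_posSemidef {A B : Matrix ι ι 𝕜} (hA : A.PosSemidef)
    (hB : B.PosSemidef) : 0 ≤ trace (A * B) := by
  classical
  obtain ⟨D, rfl⟩ := CStarAlgebra.nonneg_iff_eq_star_mul_self.mp hB.nonneg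
  rw [star_eq_conjTranspose, ← Matrix.mul_assoc, trace_mul_comm, ← Matrix.mul_assoc]
  exact (hA.mul_mul_conjTranspose_same D).trace_nonneg

variable [DecidableEq ι]

open scoped ComplexOrder in
theorem trace_sq_add_trace_sq_le_trace_add_sq {A B : Matrix ι ι 𝕜} (hA : A.PosSemidef)
    (hB : B.PosSemidef) : trace (A ^ 2) + trace (B ^ 2) ≤ trace ((A + B) ^ 2) := by
  have hexpand : trace ((A + B) ^ 2)
      = trace (A ^ 2) + trace (B ^ 2) + (trace (A * B) + trace (A * B)) := by
    simp only [sq, Matrix.add_mul, Matrix.mul_add, trace_add, trace_mul_comm B A]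
    ring
  have hAB := trace_mul_nonneg_of_posSemidef hA hB
  rw [hexpand]
  exact le_add_of_nonneg_right (add_nonneg hAB hAB)

theorem trace_sq_eq_sum_sq_of_isSymm {R : Type*} [CommSemiring R] {A : Matrix ι ι R}
    (hA : A.IsSymm) : trace (A ^ 2) = ∑ i, ∑ j, A i j ^ 2 := by
  simp only [sq A, trace, diag_apply, mul_apply]
  refine Finset.sum_congr rfl fun i _ => Finset.sum_congr rfl fun j _ => ?_
  rw [hA.apply, sq]

end Trace

section ExpMat

variable {Ω : Type*} {m mΩ : MeasurableSpace Ω} {μ : Measure Ω} {n : ℕ}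
  {M N : Ω → Matrix (Fin n) (Fin n) ℝ}

theorem ae_eq_of_forall_apply_ae_eq (h : ∀ i j, (fun ω => M ω i j) =ᵐ[μ] fun ω => N ω i j) :
    M =ᵐ[μ] N := by
  filter_upwards [ae_all_iff.mpr fun i => ae_all_iff.mpr (h i)] with ω hω
  exact Matrix.ext hω

theorem expMat_congr_ae (h : M =ᵐ[μ] N) : expMat μ M = expMat μ N := by
  ext i j
  exact integral_congr_ae (h.mono fun _ hω => congrFun₂ hω i j)

theorem expMat_add (hM : ∀ i j, Integrable (fun ω => M ω i j) μ)
    (hN : ∀ i j, Integrable (fun ω => N ω i j) μ) :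
    expMat μ (M + N) = expMat μ M + expMat μ N := by
  ext i j
  exact integral_add (hM i j) (hN i j)

theorem expMat_smul (c : ℝ) : expMat μ (c • M) = c • expMat μ M := by
  ext i j
  exact integral_const_mul c _

theorem expMat_ceMat (hm : m ≤ mΩ) [SigmaFinite (μ.trim hm)] :
    expMat μ (ceMat m μ M) = expMat μ M := by
  ext i j
  exact integral_condExp hm

theorem isSymm_expMat (hM : ∀ ω, (M ω).IsSymm) : (expMat μ M).IsSymm := by
  ext i j
  simp only [transpose_apply, expMat, of_apply, (hM _).apply]

theorem trExp_eq_integral_trace (hM : ∀ i j, Integrable (fun ω => M ω i j) μ) :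
    trExp μ M = ∫ ω, trace (M ω) ∂μ := by
  simp only [trExp, trace, diag_apply, expMat, of_apply]
  exact (integral_finsetSum _ fun i _ => hM i i).symm

theorem trExp_add (hM : ∀ i j, Integrable (fun ω => M ω i j) μ)
    (hN : ∀ i j, Integrable (fun ω => N ω i j) μ) :
    trExp μ (M + N) = trExp μ M + trExp μ N := by
  rw [trExp, expMat_add hM hN, trace_add, trExp, trExp]

theorem trExp_mono (hM : ∀ i j, Integrable (fun ω => M ω i j) μ)
    (hN : ∀ i j, Integrable (fun ω => N ω i j) μ)
    (h : ∀ᵐ ω ∂μ, trace (M ω) ≤ trace (N ω)) : trExp μ M ≤ trExp μ N := by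
  rw [trExp_eq_integral_trace hM, trExp_eq_integral_trace hN]
  exact integral_mono_ae (integrable_finsetSum _ fun i _ => hM i i)
    (integrable_finsetSum _ fun i _ => hN i i) h

theorem integrable_sq_apply_of_memLp_two (hM : ∀ i j, MemLp (fun ω => M ω i j) 2 μ)
    (i j : Fin n) : Integrable (fun ω => (M ω ^ 2) i j) μ := by
  simp only [sq, mul_apply]
  exact integrable_finsetSum _ fun k _ => (hM i k).integrable_mul (hM k j)

theorem memLp_two_mul_of_memLp_four {R : Type*} [NormedRing R] {f g : Ω → R}
    (hf : MemLp f 4 μ) (hg : MemLp g 4 μ) : MemLp (fun ω => f ω * g ω) 2 μ := by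
  have : ENNReal.HolderTriple 4 4 2 := ⟨by
    rw [← two_mul, ← ENNReal.toReal_eq_toReal_iff' (by finiteness) (by finiteness)]
    norm_num⟩
  exact hg.mul hf

theorem sq_integral_le_integral_sq [IsProbabilityMeasure μ] {f : Ω → ℝ} (hf : MemLp f 2 μ) :
    (∫ ω, f ω ∂μ) ^ 2 ≤ ∫ ω, f ω ^ 2 ∂μ := by
  have h := variance_nonneg f μ
  rw [variance_eq_sub hf] at h
  exact sub_nonneg.mp h

theorem trace_expMat_sq_le_trExp_sq [IsProbabilityMeasure μ] (hsymm : ∀ ω, (M ω).IsSymm)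
    (hM : ∀ i j, MemLp (fun ω => M ω i j) 2 μ) :
    trace (expMat μ M ^ 2) ≤ trExp μ (fun ω => M ω ^ 2) := by
  have hsq : ∀ i j, Integrable (fun ω => M ω i j ^ 2) μ := fun i j => (hM i j).integrable_sq
  rw [trExp_eq_integral_trace (integrable_sq_apply_of_memLp_two hM)]
  simp only [trace_sq_eq_sum_sq_of_isSymm (isSymm_expMat hsymm),
    trace_sq_eq_sum_sq_of_isSymm (hsymm _)]
  rw [integral_finsetSum _ fun i _ => integrable_finsetSum _ fun j _ => hsq i j]
  refine Finset.sum_le_sum fun i _ => ?_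
  rw [integral_finsetSum _ fun j _ => hsq i j]
  exact Finset.sum_le_sum fun j _ => sq_integral_le_integral_sq (hM i j)

end ExpMat

section CondCov

variable {Ω : Type*} {m mΩ : MeasurableSpace Ω} {μ : Measure Ω} {n : ℕ}

theorem ceMat_congr_ae {M N : Ω → Matrix (Fin n) (Fin n) ℝ} (h : M =ᵐ[μ] N) :
    ceMat m μ M =ᵐ[μ] ceMat m μ N :=
  ae_eq_of_forall_apply_ae_eq fun i j =>
    condExp_congr_ae (h.mono fun _ hω => congrFun₂ hω i j)

theorem ceMat_smul_ae_eq (c : ℝ) (M : Ω → Matrix (Fin n) (Fin n) ℝ) :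
    ceMat m μ (c • M) =ᵐ[μ] c • ceMat m μ M :=
  ae_eq_of_forall_apply_ae_eq fun i j => condExp_smul c (fun ω => M ω i j) m

theorem dotProduct_ceMat_mulVec_ae_eq {M : Ω → Matrix (Fin n) (Fin n) ℝ}
    (hM : ∀ i j, Integrable (fun ω => M ω i j) μ) (w : Fin n → ℝ) :
    (fun ω => w ⬝ᵥ ceMat m μ M ω *ᵥ w) =ᵐ[μ] μ[fun ω => w ⬝ᵥ M ω *ᵥ w | m] := by
  have hexpand : (fun ω => w ⬝ᵥ M ω *ᵥ w)
      = ∑ p : Fin n × Fin n, (w p.1 * w p.2) • fun ω => M ω p.1 p.2 := by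
    ext ω
    simp only [dotProduct, mulVec, Finset.mul_sum, Finset.sum_apply, Pi.smul_apply, smul_eq_mul,
      Fintype.sum_prod_type]
    refine Finset.sum_congr rfl fun i _ => Finset.sum_congr rfl fun j _ => ?_
    ring
  rw [hexpand]
  have hsmul : ∀ᵐ ω ∂μ, ∀ p : Fin n × Fin n,
      (μ[(w p.1 * w p.2) • fun ω => M ω p.1 p.2 | m]) ω
        = (w p.1 * w p.2) * (μ[fun ω => M ω p.1 p.2 | m]) ω :=
    ae_all_iff.mpr fun p => condExp_smul _ _ m
  filter_upwards [condExp_finsetSum (μ := μ) (s := Finset.univ)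
    (fun (p : Fin n × Fin n) _ => (hM p.1 p.2).smul (w p.1 * w p.2)) m, hsmul] with ω hsum hω
  rw [hsum, Finset.sum_apply]
  simp only [hω, dotProduct, mulVec, Finset.mul_sum, ceMat, of_apply, Fintype.sum_prod_type]
  refine Finset.sum_congr rfl fun i _ => Finset.sum_congr rfl fun j _ => ?_
  ring

theorem isSymm_ceMat {M : Ω → Matrix (Fin n) (Fin n) ℝ} (hM : ∀ ω, (M ω).IsSymm) (ω : Ω) :
    (ceMat m μ M ω).IsSymm := by
  ext i j
  simp only [transpose_apply, ceMat, of_apply, (hM _).apply]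

theorem ae_posSemidef_ceMat {M : Ω → Matrix (Fin n) (Fin n) ℝ}
    (hM : ∀ i j, Integrable (fun ω => M ω i j) μ) (hpos : ∀ ω, (M ω).PosSemidef) :
    ∀ᵐ ω ∂μ, (ceMat m μ M ω).PosSemidef := by
  have hquad : ∀ w : Fin n → ℝ, ∀ᵐ ω ∂μ, 0 ≤ w ⬝ᵥ ceMat m μ M ω *ᵥ w := by
    intro w
    filter_upwards [dotProduct_ceMat_mulVec_ae_eq (m := m) hM w,
      condExp_nonneg (m := m) (μ := μ) (f := fun ω => w ⬝ᵥ M ω *ᵥ w)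
        (.of_forall fun ω => (hpos ω).dotProduct_mulVec_nonneg w)] with ω heq hnonneg
    exact heq ▸ hnonneg
  -- Each direction has its own null set, so only countably many of them can be treated at once.
  filter_upwards [ae_all_iff.mpr fun k => hquad (TopologicalSpace.denseSeq (Fin n → ℝ) k)]
    with ω hω
  have hclosed : IsClosed {w : Fin n → ℝ | 0 ≤ w ⬝ᵥ ceMat m μ M ω *ᵥ w} :=
    isClosed_le continuous_const (by fun_prop)
  exact .of_dotProduct_mulVec_nonneg (isSymm_ceMat (fun ω => (hpos ω).isHermitian) ω) fun w =>
    (TopologicalSpace.denseRange_denseSeq _).induction_on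
      (p := fun w => 0 ≤ w ⬝ᵥ ceMat m μ M ω *ᵥ w) w hclosed hω

theorem condExp_centered_mul_centered_ae_eq [IsFiniteMeasure μ] (hm : m ≤ mΩ) {V W : Ω → ℝ}
    (hV : MemLp V 2 μ) (hW : MemLp W 2 μ) :
    μ[(V - μ[V | m]) * (W - μ[W | m]) | m] =ᵐ[μ] μ[V * W | m] - μ[V | m] * μ[W | m] := by
  have hV' : MemLp (μ[V | m]) 2 μ := hV.condExp one_le_two
  have hW' : MemLp (μ[W | m]) 2 μ := hW.condExp one_le_two
  have hVc : MemLp (V - μ[V | m]) 2 μ := hV.sub hV'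
  have hcenter : μ[V - μ[V | m] | m] =ᵐ[μ] 0 := by
    filter_upwards [condExp_sub (hV.integrable one_le_two) (hV'.integrable one_le_two) m] with ω h
    rw [h, condExp_of_stronglyMeasurable hm stronglyMeasurable_condExp integrable_condExp]
    exact sub_self _
  rw [mul_sub (V - μ[V | m]), sub_mul V]
  filter_upwards [condExp_sub ((hV.integrable_mul hW).sub (hV'.integrable_mul hW))
      (hVc.integrable_mul hW') m,
    condExp_sub (hV.integrable_mul hW) (hV'.integrable_mul hW) m,
    condExp_mul_of_stronglyMeasurable_right stronglyMeasurable_condExp (hVc.integrable_mul hW')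
      (hVc.integrable one_le_two),
    condExp_mul_of_stronglyMeasurable_left stronglyMeasurable_condExp (hV'.integrable_mul hW)
      (hW.integrable one_le_two), hcenter] with ω h₁ h₂ h₃ h₄ h₅
  simp only [Pi.sub_apply, Pi.mul_apply, Pi.zero_apply] at *
  rw [h₁, h₂, h₃, h₄, h₅, zero_mul, sub_zero]

theorem covMat_ae_eq_ceMat_centered [IsFiniteMeasure μ] (hm : m ≤ mΩ) {V : Ω → Fin n → ℝ}
    (hV : ∀ i, MemLp (fun ω => V ω i) 2 μ) :
    covMat m μ V =ᵐ[μ]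
      ceMat m μ (fun ω => vecMulVec (V ω - ceVec m μ V ω) (V ω - ceVec m μ V ω)) :=
  ae_eq_of_forall_apply_ae_eq fun i j =>
    (condExp_centered_mul_centered_ae_eq hm (hV i) (hV j)).symm

theorem ae_posSemidef_covMat [IsFiniteMeasure μ] (hm : m ≤ mΩ) {V : Ω → Fin n → ℝ}
    (hV : ∀ i, MemLp (fun ω => V ω i) 2 μ) : ∀ᵐ ω ∂μ, (covMat m μ V ω).PosSemidef := by
  have hcentered : ∀ i, MemLp (fun ω => V ω i - ceVec m μ V ω i) 2 μ := fun i =>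
    (hV i).sub ((hV i).condExp one_le_two)
  filter_upwards [covMat_ae_eq_ceMat_centered hm hV,
    ae_posSemidef_ceMat (m := m) (fun i j => (hcentered i).integrable_mul (hcentered j))
      fun ω => posSemidef_vecMulVec_self_star (V ω - ceVec m μ V ω)] with ω heq hpos
  rw [heq]
  exact hpos

theorem covMat_smul_ae_eq (c : ℝ) (V : Ω → Fin n → ℝ) :
    covMat m μ (c • V) =ᵐ[μ] c ^ 2 • covMat m μ V := by
  have hmean : ∀ᵐ ω ∂μ, ∀ i, ceVec m μ (c • V) ω i = c * ceVec m μ V ω i :=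
    ae_all_iff.mpr fun i => condExp_smul c (fun ω => V ω i) m
  have hprod : (fun ω => vecMulVec ((c • V) ω) ((c • V) ω))
      = c ^ 2 • fun ω => vecMulVec (V ω) (V ω) := by
    ext ω
    simp only [vecMulVec_apply, Pi.smul_apply, Matrix.smul_apply, smul_eq_mul]
    ring
  filter_upwards [hmean, ceMat_smul_ae_eq (m := m) (μ := μ) (c ^ 2) fun ω => vecMulVec (V ω) (V ω)]
    with ω h₁ h₂
  rw [covMat, hprod, h₂, Pi.smul_apply, Pi.smul_apply, covMat, smul_sub]
  ext i j
  simp only [Matrix.sub_apply, vecMulVec_apply, h₁, Matrix.smul_apply, smul_eq_mul]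
  ring

theorem covMat_add_left_ae_eq [IsFiniteMeasure μ] (hm : m ≤ mΩ) {V W : Ω → Fin n → ℝ}
    (hV : ∀ i, MemLp (fun ω => V ω i) 2 μ) (hW : ∀ i, MemLp (fun ω => W ω i) 2 μ)
    (hWm : Measurable[m] W) : covMat m μ (W + V) =ᵐ[μ] covMat m μ V := by
  have hmean : ∀ᵐ ω ∂μ, ∀ i, ceVec m μ (W + V) ω i = W ω i + ceVec m μ V ω i := by
    refine ae_all_iff.mpr fun i => ?_
    have hWi := (hW i).integrable one_le_two
    have hWim : StronglyMeasurable[m] fun ω => W ω i :=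
      ((measurable_pi_apply i).comp hWm).stronglyMeasurable
    filter_upwards [condExp_add hWi ((hV i).integrable one_le_two) m] with ω h
    rw [condExp_of_stronglyMeasurable hm hWim hWi] at h
    exact h
  have hcentered : (fun ω => vecMulVec ((W + V) ω - ceVec m μ (W + V) ω)
        ((W + V) ω - ceVec m μ (W + V) ω))
      =ᵐ[μ] fun ω => vecMulVec (V ω - ceVec m μ V ω) (V ω - ceVec m μ V ω) := by
    filter_upwards [hmean] with ω h
    rw [funext h, show (W + V) ω - (fun i => W ω i + ceVec m μ V ω i) = V ω - ceVec m μ V ω from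
      add_sub_add_left_eq_sub (V ω) (ceVec m μ V ω) (W ω)]
  exact (covMat_ae_eq_ceMat_centered hm fun i => (hW i).add (hV i)).trans <|
    (ceMat_congr_ae hcentered).trans (covMat_ae_eq_ceMat_centered hm hV).symm

theorem covMat_noise_ae_eq_smul_covMat_signal [IsFiniteMeasure μ] (hm : m ≤ mΩ)
    {X Z : Ω → Fin n → ℝ} (hX : ∀ i, MemLp (fun ω => X ω i) 2 μ)
    (hZ : ∀ i, MemLp (fun ω => Z ω i) 2 μ) {snr : ℝ} (hsnr : 0 ≤ snr)
    (hY : Measurable[m] (obs X Z snr)) : covMat m μ Z =ᵐ[μ] snr • covMat m μ X := by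
  have hnoise : Z = obs X Z snr + (-√snr) • X := by
    ext ω i
    simp only [obs, Pi.add_apply, Pi.smul_apply, smul_eq_mul]
    ring
  have hshift : covMat m μ Z =ᵐ[μ] covMat m μ ((-√snr) • X) := by
    conv_lhs => rw [hnoise]
    exact covMat_add_left_ae_eq hm (fun i => (hX i).const_mul _)
      (fun i => ((hX i).const_mul _).add (hZ i)) hY
  have hscale := covMat_smul_ae_eq (m := m) (μ := μ) (-√snr) X
  rw [neg_sq, Real.sq_sqrt hsnr] at hscale
  exact hshift.trans hscale

theorem trExp_sq_covMat_add_trace_sq_le_trExp_sq_ceMat [IsProbabilityMeasure μ] (hm : m ≤ mΩ)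
    {V : Ω → Fin n → ℝ} (hV : ∀ i, MemLp (fun ω => V ω i) 4 μ) :
    trExp μ (fun ω => covMat m μ V ω ^ 2)
        + trace ((expMat μ (fun ω => vecMulVec (V ω) (V ω)) - expMat μ (covMat m μ V)) ^ 2)
      ≤ trExp μ (fun ω => ceMat m μ (fun ω => vecMulVec (V ω) (V ω)) ω ^ 2) := by
  set S := ceMat m μ fun ω => vecMulVec (V ω) (V ω)
  set C := covMat m μ V
  set P := fun ω => vecMulVec (ceVec m μ V ω) (ceVec m μ V ω)
  have hS : ∀ i j, MemLp (fun ω => S ω i j) 2 μ := fun i j =>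
    (memLp_two_mul_of_memLp_four (hV i) (hV j)).condExp one_le_two
  have hP : ∀ i j, MemLp (fun ω => P ω i j) 2 μ := fun i j =>
    memLp_two_mul_of_memLp_four ((hV i).condExp (by norm_num)) ((hV j).condExp (by norm_num))
  have hC : ∀ i j, MemLp (fun ω => C ω i j) 2 μ := fun i j => (hS i j).sub (hP i j)
  have hSCP : S = C + P := (sub_add_cancel S P).symm
  have hmean : expMat μ (fun ω => vecMulVec (V ω) (V ω)) - expMat μ C = expMat μ P := by
    rw [← expMat_ceMat hm, sub_eq_iff_eq_add',
      ← expMat_add (fun i j => (hC i j).integrable one_le_two)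
        (fun i j => (hP i j).integrable one_le_two), ← hSCP]
  have hCsq := integrable_sq_apply_of_memLp_two hC
  have hPsq := integrable_sq_apply_of_memLp_two hP
  calc trExp μ (fun ω => C ω ^ 2) + trace ((_ - expMat μ C) ^ 2)
      ≤ trExp μ (fun ω => C ω ^ 2) + trExp μ (fun ω => P ω ^ 2) := by
        rw [hmean]
        gcongr
        exact trace_expMat_sq_le_trExp_sq (fun ω => transpose_vecMulVec _ _) hP
    _ = trExp μ ((fun ω => C ω ^ 2) + fun ω => P ω ^ 2) := (trExp_add hCsq hPsq).symm
    _ ≤ trExp μ (fun ω => S ω ^ 2) := by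
        refine trExp_mono (fun i j => (hCsq i j).add (hPsq i j))
          (integrable_sq_apply_of_memLp_two hS) ?_
        filter_upwards [ae_posSemidef_covMat hm fun i => (hV i).mono_exponent (by norm_num)]
          with ω hpos
        rw [hSCP, Pi.add_apply, trace_add]
        exact trace_sq_add_trace_sq_le_trace_add_sq hpos (posSemidef_vecMulVec_self_star _)

end CondCov

section Moments

variable {Ω ι : Type*} [MeasurableSpace Ω] {μ : Measure Ω}

theorem memLp_two_of_integrable_sum_sq [Fintype ι] {X : Ω → ι → ℝ}
    (hX : ∀ i, AEStronglyMeasurable (fun ω => X ω i) μ)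
    (hX2 : Integrable (fun ω => ∑ i, X ω i ^ 2) μ) (i : ι) : MemLp (fun ω => X ω i) 2 μ := by
  refine (memLp_two_iff_integrable_sq (hX i)).mpr
    (hX2.mono' ((hX i).pow 2) (.of_forall fun ω => ?_))
  rw [Real.norm_of_nonneg (sq_nonneg _)]
  exact Finset.single_le_sum (f := fun k => X ω k ^ 2) (fun k _ => sq_nonneg _)
    (Finset.mem_univ i)

theorem expMat_vecMulVec_eq_one [IsProbabilityMeasure μ] {n : ℕ} {Z : Ω → Fin n → ℝ}
    (hZ : ∀ i, MemLp (fun ω => Z ω i) 2 μ) (hmean : ∀ i, ∫ ω, Z ω i ∂μ = 0)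
    (hvar : ∀ i, Var[fun ω => Z ω i; μ] = 1)
    (hindep : Pairwise fun i j => IndepFun (fun ω => Z ω i) (fun ω => Z ω j) μ) :
    expMat μ (fun ω => vecMulVec (Z ω) (Z ω)) = 1 := by
  ext i j
  have hcov : cov[fun ω => Z ω i, fun ω => Z ω j; μ] = ∫ ω, Z ω i * Z ω j ∂μ := by
    simpa [hmean] using covariance_eq_sub (hZ i) (hZ j)
  simp only [expMat, of_apply, vecMulVec_apply, ← hcov]
  obtain rfl | hij := eq_or_ne i j
  · rw [covariance_self (hZ i).aemeasurable, hvar, one_apply_eq]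
  · rw [(hindep hij).covariance_eq_zero (hZ i) (hZ j), one_apply_ne hij]

theorem hasLaw_eval_of_hasLaw_pi [Fintype ι] {E : ι → Type*} [∀ i, MeasurableSpace (E i)]
    {ν : ∀ i, Measure (E i)} [∀ i, IsProbabilityMeasure (ν i)] {Z : Ω → ∀ i, E i}
    (hZ : HasLaw Z (Measure.pi ν) μ) (i : ι) : HasLaw (fun ω => Z ω i) (ν i) μ :=
  (measurePreserving_eval ν i).fun_comp_hasLaw hZ

theorem expMat_vecMulVec_eq_one_of_hasLaw_pi_gaussianReal {n : ℕ} {Z : Ω → Fin n → ℝ}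
    (hZ : HasLaw Z (Measure.pi fun _ => gaussianReal 0 1) μ) :
    expMat μ (fun ω => vecMulVec (Z ω) (Z ω)) = 1 := by
  have : IsProbabilityMeasure μ := hZ.isProbabilityMeasure
  have hlaw := hasLaw_eval_of_hasLaw_pi hZ
  refine expMat_vecMulVec_eq_one (fun i => (hlaw i).hasGaussianLaw.memLp_two) (fun i => ?_)
    (fun i => ?_) fun i j hij => ((iIndepFun_iff_hasLaw_pi_pi hlaw).mpr hZ).indepFun hij
  · rw [(hlaw i).integral_eq, integral_id_gaussianReal]
  · rw [(hlaw i).variance_eq, variance_id_gaussianReal, NNReal.coe_one]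

end Moments

theorem measurable_obs_obsSigma {Ω : Type*} [MeasurableSpace Ω] {n : ℕ} (X Z : Ω → Fin n → ℝ)
    (snr : ℝ) : Measurable[obsSigma X Z snr] (obs X Z snr) :=
  comap_measurable _

theorem obsSigma_le {Ω : Type*} [mΩ : MeasurableSpace Ω] {n : ℕ} {X Z : Ω → Fin n → ℝ}
    (hX : Measurable X) (hZ : Measurable Z) (snr : ℝ) : obsSigma X Z snr ≤ mΩ := by
  have hobs : Measurable (obs X Z snr) := by
    unfold obs
    fun_prop
  exact hobs.comap_le

theorem derivative_mmse_refined_bound_general {Ω : Type*} {m mΩ : MeasurableSpace Ω}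
    {μ : Measure Ω} [IsProbabilityMeasure μ] (hm : m ≤ mΩ) {n : ℕ} (hn : 1 ≤ n)
    {X Z : Ω → Fin n → ℝ} (hX : ∀ i, MemLp (fun ω => X ω i) 2 μ)
    (hZ : ∀ i, MemLp (fun ω => Z ω i) 4 μ) {snr : ℝ} (hsnr : 0 < snr)
    (hY : Measurable[m] (obs X Z snr)) :
    (1 / (n : ℝ)) * trExp μ (fun ω => covMat m μ X ω ^ 2) ≤
      (1 / ((n : ℝ) * snr ^ 2)) *
        (trExp μ (fun ω => ceMat m μ (fun ω' => vecMulVec (Z ω') (Z ω')) ω ^ 2)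
          - trace ((expMat μ (fun ω => vecMulVec (Z ω) (Z ω))
              - snr • expMat μ (covMat m μ X)) ^ 2)) := by
  have hcov : covMat m μ Z =ᵐ[μ] snr • covMat m μ X :=
    covMat_noise_ae_eq_smul_covMat_signal hm hX
      (fun i => (hZ i).mono_exponent (by norm_num)) hsnr.le hY
  have hcovSq : trExp μ (fun ω => covMat m μ Z ω ^ 2)
      = snr ^ 2 * trExp μ (fun ω => covMat m μ X ω ^ 2) := by
    have hsq : (fun ω => covMat m μ Z ω ^ 2) =ᵐ[μ] snr ^ 2 • fun ω => covMat m μ X ω ^ 2 := by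
      filter_upwards [hcov] with ω h
      rw [h, Pi.smul_apply, Pi.smul_apply, smul_pow]
    rw [trExp, expMat_congr_ae hsq, expMat_smul, trace_smul, smul_eq_mul, trExp]
  have hnoise := trExp_sq_covMat_add_trace_sq_le_trExp_sq_ceMat hm hZ
  rw [hcovSq, expMat_congr_ae hcov, expMat_smul, ← le_sub_iff_add_le] at hnoise
  have hn' : (0 : ℝ) < n := Nat.cast_pos.mpr hn
  rw [one_div_mul_eq_div, one_div_mul_eq_div, div_le_div_iff₀ hn' (by positivity)]
  linarith [mul_le_mul_of_nonneg_left hnoise hn'.le]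

/-- **Proposition 9 (refined bound on the derivative of the MMSE).**
`(1/n)·Tr(E[(Cov(X|Y))²]) ≤ (1/(n·snr²))·(Tr(E[(E[ZZᵀ|Y])²]) − Tr((I − snr·E[Cov(X|Y)])²))`. -/
theorem derivative_mmse_refined_bound {Ω : Type*} [MeasurableSpace Ω] (μ : Measure Ω) [IsProbabilityMeasure μ]
    (n : ℕ) (hn : 1 ≤ n) (X Z : Ω → Fin n → ℝ)
    (hX : Measurable X) (hZ : Measurable Z)
    (hZlaw : Measure.map Z μ = Measure.pi fun _ : Fin n => gaussianReal 0 1)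
    (hindep : IndepFun X Z μ)
    (hX2 : Integrable (fun ω => ∑ i, (X ω i) ^ 2) μ)
    (snr : ℝ) (hsnr : 0 < snr) :
    (1 / (n : ℝ)) * trExp μ (fun ω => (covMat (obsSigma X Z snr) μ X ω) ^ 2) ≤
      (1 / ((n : ℝ) * snr ^ 2)) *
        (trExp μ (fun ω =>
            (ceMat (obsSigma X Z snr) μ (fun ω' => Matrix.vecMulVec (Z ω') (Z ω')) ω) ^ 2)
          - Matrix.trace (((1 : Matrix (Fin n) (Fin n) ℝ)
              - snr • expMat μ (covMat (obsSigma X Z snr) μ X)) ^ 2)) := by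
  have hZ' : HasLaw Z (Measure.pi fun _ : Fin n => gaussianReal 0 1) μ :=
    ⟨hZ.aemeasurable, hZlaw⟩
  simpa only [expMat_vecMulVec_eq_one_of_hasLaw_pi_gaussianReal hZ'] using
    derivative_mmse_refined_bound_general (obsSigma_le hX hZ snr) hn
      (memLp_two_of_integrable_sum_sq (fun i => hX.eval.aestronglyMeasurable) hX2)
      (fun i => (hasLaw_eval_of_hasLaw_pi hZ' i).hasGaussianLaw.memLp (by norm_num)) hsnr
      (measurable_obs_obsSigma X Z snr)

end
end

section
/- (Equation (48), MMSE bound for the three-point full-power input X_a.) For every a ≥ 1, let X_a be the random variable taking values −a, 0, a with probabilities 1/(2a²), 1 − 1/a², 1/(2a²) respectively. Then E[X_a²] = 1, and for every snr > 0, mmse(X_a, snr) ≤ min( 1, 4·(a²+1)·e^{−a²·snr/8} ). -/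
/-!
The conditional expectation is the best square-integrable estimator measurable in
`Y = √snr · X + Z`, so it suffices to bound the error of some estimator. Estimating `X` by `0`
costs `E[X²] = 1`. Rounding `Y` to the nearest of `-√snr · a`, `0`, `√snr · a`, i.e. thresholding
at `±t` with `t = √snr · a / 2`, costs at most `(a - X)²` when `Z ≥ t`, at most `(a + X)²` when
`Z ≤ -t`, and nothing otherwise. As `Z` is independent of `X`, the Chernoff bound `e^{-t²/2}` on
both tails factors out, and `E[(a - X)²] + E[(a + X)²] = 2 (a² + E[X²])`.
-/

open MeasureTheory ProbabilityTheory Real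
open scoped ENNReal

noncomputable section

/-- The scalar observation `Y_snr = √snr · X + Z`. -/
def obsS {Ω : Type*} (X Z : Ω → ℝ) (snr : ℝ) : Ω → ℝ :=
  fun ω => Real.sqrt snr * X ω + Z ω

/-- The σ-algebra generated by the observation `Y_snr`. -/
def obsSigmaS {Ω : Type*} [MeasurableSpace Ω] (X Z : Ω → ℝ) (snr : ℝ) : MeasurableSpace Ω :=
  MeasurableSpace.comap (obsS X Z snr) inferInstance

/-- `mmse(X, snr) = E[(X − E[X | Y_snr])²]`. -/
def mmseS {Ω : Type*} [MeasurableSpace Ω] (μ : Measure Ω) (X Z : Ω → ℝ) (snr : ℝ) : ℝ :=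
  ∫ ω, (X ω - (μ[X | obsSigmaS X Z snr]) ω) ^ 2 ∂μ

/-- The law of `X_a`: values `−a, 0, a` with probabilities `1/(2a²), 1−1/a², 1/(2a²)`. -/
def XaLaw (a : ℝ) : Measure ℝ :=
  ENNReal.ofReal (1 / (2 * a ^ 2)) • Measure.dirac (-a)
    + ENNReal.ofReal (1 - 1 / a ^ 2) • Measure.dirac 0
    + ENNReal.ofReal (1 / (2 * a ^ 2)) • Measure.dirac a

section LeastSquares

variable {Ω : Type*} {m m₀ : MeasurableSpace Ω} {μ : Measure[m₀] Ω} [IsFiniteMeasure μ]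

lemma integral_sub_condExp_sq_le_integral_sq (hm : m ≤ m₀) {X : Ω → ℝ} (hX : MemLp X 2 μ) :
    ∫ ω, (X ω - (μ[X | m]) ω) ^ 2 ∂μ ≤ ∫ ω, X ω ^ 2 ∂μ :=
  calc ∫ ω, (X ω - (μ[X | m]) ω) ^ 2 ∂μ
      = ∫ ω, (Var[X; μ | m]) ω ∂μ := (integral_condExp hm).symm
    _ ≤ ∫ ω, (μ[X ^ 2 | m]) ω ∂μ :=
        integral_mono_ae integrable_condVar integrable_condExp (condVar_ae_le_condExp_sq hm hX)
    _ = ∫ ω, X ω ^ 2 ∂μ := integral_condExp hm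

lemma integral_sub_condExp_sq_le (hm : m ≤ m₀) {X F : Ω → ℝ} (hX : MemLp X 2 μ)
    (hF : MemLp F 2 μ) (hFm : AEStronglyMeasurable[m] F μ) :
    ∫ ω, (X ω - (μ[X | m]) ω) ^ 2 ∂μ ≤ ∫ ω, (X ω - F ω) ^ 2 ∂μ := by
  have hFint : Integrable F μ := hF.integrable one_le_two
  have hcond : μ[X - F | m] =ᵐ[μ] μ[X | m] - F :=
    (condExp_sub (hX.integrable one_le_two) hFint m).trans
      (Filter.EventuallyEq.rfl.sub (condExp_of_aestronglyMeasurable' hm hFm hFint))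
  calc ∫ ω, (X ω - (μ[X | m]) ω) ^ 2 ∂μ
      = ∫ ω, ((X - F) ω - (μ[X - F | m]) ω) ^ 2 ∂μ := by
        refine integral_congr_ae ?_
        filter_upwards [hcond] with ω hω
        simp only [Pi.sub_apply, hω, sub_sub_sub_cancel_right]
    _ ≤ ∫ ω, (X ω - F ω) ^ 2 ∂μ := integral_sub_condExp_sq_le_integral_sq hm (hX.sub hF)

end LeastSquares

section Estimators

variable {Ω : Type*} [MeasurableSpace Ω] {μ : Measure Ω} [IsFiniteMeasure μ] {X Z : Ω → ℝ}

lemma measurable_obsS (hX : Measurable X) (hZ : Measurable Z) (snr : ℝ) :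
    Measurable (obsS X Z snr) :=
  (hX.const_mul _).add hZ

lemma mmseS_le_integral_sq (hX : Measurable X) (hZ : Measurable Z) (hX2 : MemLp X 2 μ) (snr : ℝ) :
    mmseS μ X Z snr ≤ ∫ ω, X ω ^ 2 ∂μ :=
  integral_sub_condExp_sq_le_integral_sq (measurable_obsS hX hZ snr).comap_le hX2

lemma mmseS_le_integral_sub_comp_obsS_sq (hX : Measurable X) (hZ : Measurable Z)
    (hX2 : MemLp X 2 μ) {snr : ℝ} {T : ℝ → ℝ} (hT : Measurable T)
    (hT2 : MemLp (fun ω => T (obsS X Z snr ω)) 2 μ) :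
    mmseS μ X Z snr ≤ ∫ ω, (X ω - T (obsS X Z snr ω)) ^ 2 ∂μ :=
  integral_sub_condExp_sq_le (measurable_obsS hX hZ snr).comap_le hX2 hT2
    (hT.comp (comap_measurable _)).aestronglyMeasurable

end Estimators

section ThresholdDecision

/-- The three-level decision rule that estimates the input to be `a` if the observation `y` exceeds
`t`, `-a` if `y` is below `-t`, and `0` otherwise. -/
def thresholdDecision (a t y : ℝ) : ℝ := if t < y then a else if y < -t then -a else 0

lemma measurable_thresholdDecision (a t : ℝ) : Measurable (thresholdDecision a t) :=
  Measurable.ite measurableSet_Ioi measurable_const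
    (Measurable.ite measurableSet_Iio measurable_const measurable_const)

lemma abs_thresholdDecision_le (a t y : ℝ) : |thresholdDecision a t y| ≤ |a| := by
  unfold thresholdDecision
  split_ifs <;> simp

lemma sub_thresholdDecision_sq_le {a r x : ℝ} (hra : 0 ≤ r * a) (hx : x ∈ ({-a, 0, a} : Set ℝ))
    (z : ℝ) :
    (x - thresholdDecision a (r * a / 2) (r * x + z)) ^ 2
      ≤ (Set.Ici (r * a / 2)).indicator (fun _ => (a - x) ^ 2) z
        + (Set.Iic (-(r * a / 2))).indicator (fun _ => (a + x) ^ 2) z := by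
  have ha := sq_nonneg a
  simp only [thresholdDecision, Set.indicator_apply, Set.mem_Ici, Set.mem_Iic]
  rcases hx with rfl | rfl | rfl <;> split_ifs <;> first | (exfalso; linarith) | nlinarith

end ThresholdDecision

section Ternary

variable {Ω : Type*} [MeasurableSpace Ω] {μ : Measure Ω} {a : ℝ} {X Z : Ω → ℝ}

lemma memLp_of_ae_mem_ternary [IsFiniteMeasure μ] (hX : AEStronglyMeasurable X μ)
    (hXa : ∀ᵐ ω ∂μ, X ω ∈ ({-a, 0, a} : Set ℝ)) (p : ℝ≥0∞) : MemLp X p μ := by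
  refine MemLp.of_bound hX |a| ?_
  filter_upwards [hXa] with ω hω
  simp only [Set.mem_insert_iff, Set.mem_singleton_iff] at hω
  rcases hω with h | h | h <;> simp [h]

lemma integral_sub_thresholdDecision_sq_le [IsFiniteMeasure μ] (ha : 0 ≤ a) (hX : Measurable X)
    (hZ : Measurable Z) (hXa : ∀ᵐ ω ∂μ, X ω ∈ ({-a, 0, a} : Set ℝ)) (hindep : IndepFun X Z μ)
    (snr : ℝ) :
    ∫ ω, (X ω - thresholdDecision a (√snr * a / 2) (obsS X Z snr ω)) ^ 2 ∂μ
      ≤ μ.real (Z ⁻¹' Set.Ici (√snr * a / 2)) * ∫ ω, (a - X ω) ^ 2 ∂μ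
        + μ.real (Z ⁻¹' Set.Iic (-(√snr * a / 2))) * ∫ ω, (a + X ω) ^ 2 ∂μ := by
  set t := √snr * a / 2
  have hX2 : MemLp X 2 μ := memLp_of_ae_mem_ternary hX.aestronglyMeasurable hXa 2
  have hupper : Integrable ((Z ⁻¹' Set.Ici t).indicator fun ω => (a - X ω) ^ 2) μ :=
    ((memLp_const a).sub hX2).integrable_sq.indicator (hZ measurableSet_Ici)
  have hlower : Integrable ((Z ⁻¹' Set.Iic (-t)).indicator fun ω => (a + X ω) ^ 2) μ :=
    ((memLp_const a).add hX2).integrable_sq.indicator (hZ measurableSet_Iic)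
  have hfactor {s : Set ℝ} (hs : MeasurableSet s) {g : ℝ → ℝ} (hg : Measurable g) :
      ∫ ω in Z ⁻¹' s, g (X ω) ∂μ = μ.real (Z ⁻¹' s) * ∫ ω, g (X ω) ∂μ :=
    Indep.setIntegral_eq_mul hZ.comap_le hindep.symm hX.aemeasurable ⟨s, hs, rfl⟩
      hg.aestronglyMeasurable
  calc ∫ ω, (X ω - thresholdDecision a t (obsS X Z snr ω)) ^ 2 ∂μ
      ≤ ∫ ω, (Z ⁻¹' Set.Ici t).indicator (fun ω => (a - X ω) ^ 2) ω
          + (Z ⁻¹' Set.Iic (-t)).indicator (fun ω => (a + X ω) ^ 2) ω ∂μ := by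
        refine integral_mono_of_nonneg (.of_forall fun _ => sq_nonneg _) (hupper.add hlower) ?_
        filter_upwards [hXa] with ω hω
        exact sub_thresholdDecision_sq_le (by positivity) hω (Z ω)
    _ = ∫ ω in Z ⁻¹' Set.Ici t, (a - X ω) ^ 2 ∂μ
          + ∫ ω in Z ⁻¹' Set.Iic (-t), (a + X ω) ^ 2 ∂μ := by
        rw [integral_add hupper hlower, integral_indicator (hZ measurableSet_Ici),
          integral_indicator (hZ measurableSet_Iic)]
    _ = μ.real (Z ⁻¹' Set.Ici t) * ∫ ω, (a - X ω) ^ 2 ∂μ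
          + μ.real (Z ⁻¹' Set.Iic (-t)) * ∫ ω, (a + X ω) ^ 2 ∂μ := by
        rw [hfactor measurableSet_Ici (g := fun x => (a - x) ^ 2) (by fun_prop),
          hfactor measurableSet_Iic (g := fun x => (a + x) ^ 2) (by fun_prop)]

lemma integral_const_sub_sq_add_integral_const_add_sq [IsProbabilityMeasure μ] (hX : MemLp X 2 μ)
    (a : ℝ) :
    ∫ ω, (a - X ω) ^ 2 ∂μ + ∫ ω, (a + X ω) ^ 2 ∂μ = 2 * (a ^ 2 + ∫ ω, X ω ^ 2 ∂μ) := by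
  calc ∫ ω, (a - X ω) ^ 2 ∂μ + ∫ ω, (a + X ω) ^ 2 ∂μ
      = ∫ ω, ((a - X ω) ^ 2 + (a + X ω) ^ 2) ∂μ :=
        (integral_add ((memLp_const a).sub hX).integrable_sq
          ((memLp_const a).add hX).integrable_sq).symm
    _ = ∫ ω, 2 * (a ^ 2 + X ω ^ 2) ∂μ := by
        congr with ω
        ring
    _ = 2 * (a ^ 2 + ∫ ω, X ω ^ 2 ∂μ) := by
        rw [integral_const_mul, integral_add (integrable_const _) hX.integrable_sq,
          integral_const, probReal_univ, one_smul]

lemma mmseS_le_of_ae_mem_ternary_of_hasSubgaussianMGF [IsProbabilityMeasure μ] {c : NNReal}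
    (ha : 0 ≤ a) (hX : Measurable X) (hZ : Measurable Z)
    (hXa : ∀ᵐ ω ∂μ, X ω ∈ ({-a, 0, a} : Set ℝ)) (hZc : HasSubgaussianMGF Z c μ)
    (hindep : IndepFun X Z μ) {snr : ℝ} (hsnr : 0 ≤ snr) :
    mmseS μ X Z snr ≤ 2 * (a ^ 2 + ∫ ω, X ω ^ 2 ∂μ) * exp (-(a ^ 2 * snr / (8 * c))) := by
  set t := √snr * a / 2 with ht_def
  set p := exp (-(a ^ 2 * snr / (8 * c))) with hp_def
  have ht : 0 ≤ t := by positivity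
  have hp : p = exp (-t ^ 2 / (2 * c)) := by
    rw [hp_def, ht_def, div_pow, mul_pow, sq_sqrt hsnr]
    ring_nf
  have hupper : μ.real (Z ⁻¹' Set.Ici t) ≤ p := hp ▸ hZc.measure_ge_le ht
  have hlower : μ.real (Z ⁻¹' Set.Iic (-t)) ≤ p := by
    simpa only [hp, Set.preimage, Set.mem_Iic, Pi.neg_apply, le_neg] using hZc.neg.measure_ge_le ht
  have hX2 : MemLp X 2 μ := memLp_of_ae_mem_ternary hX.aestronglyMeasurable hXa 2
  have hT : Measurable (thresholdDecision a t) := measurable_thresholdDecision a t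
  have hT2 : MemLp (fun ω => thresholdDecision a t (obsS X Z snr ω)) 2 μ :=
    .of_bound (hT.comp (measurable_obsS hX hZ snr)).aestronglyMeasurable |a|
      (.of_forall fun _ => abs_thresholdDecision_le a t _)
  calc mmseS μ X Z snr
      ≤ ∫ ω, (X ω - thresholdDecision a t (obsS X Z snr ω)) ^ 2 ∂μ :=
        mmseS_le_integral_sub_comp_obsS_sq hX hZ hX2 hT hT2
    _ ≤ μ.real (Z ⁻¹' Set.Ici t) * ∫ ω, (a - X ω) ^ 2 ∂μ
          + μ.real (Z ⁻¹' Set.Iic (-t)) * ∫ ω, (a + X ω) ^ 2 ∂μ :=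
        integral_sub_thresholdDecision_sq_le ha hX hZ hXa hindep snr
    _ ≤ p * ∫ ω, (a - X ω) ^ 2 ∂μ + p * ∫ ω, (a + X ω) ^ 2 ∂μ := by gcongr
    _ = 2 * (a ^ 2 + ∫ ω, X ω ^ 2 ∂μ) * p := by
        rw [← mul_add, integral_const_sub_sq_add_integral_const_add_sq hX2, mul_comm]

end Ternary

section XaLaw

lemma ae_mem_XaLaw (a : ℝ) : ∀ᵐ x ∂(XaLaw a), x ∈ ({-a, 0, a} : Set ℝ) := by
  have hdirac (c : ℝ≥0∞) {b : ℝ} (hb : b ∈ ({-a, 0, a} : Set ℝ)) :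
      ∀ᵐ x ∂(c • Measure.dirac b), x ∈ ({-a, 0, a} : Set ℝ) :=
    Measure.ae_smul_measure ((ae_dirac_iff (Set.toFinite {-a, 0, a}).measurableSet).2 hb) c
  simp only [XaLaw, ae_add_measure_iff]
  exact ⟨⟨hdirac _ (by simp), hdirac _ (by simp)⟩, hdirac _ (by simp)⟩

lemma integral_XaLaw {E : Type*} [NormedAddCommGroup E] [NormedSpace ℝ E] [CompleteSpace E]
    {a : ℝ} (ha : 1 ≤ a) (f : ℝ → E) :
    ∫ x, f x ∂(XaLaw a)
      = (1 / (2 * a ^ 2)) • f (-a) + (1 - 1 / a ^ 2) • f 0 + (1 / (2 * a ^ 2)) • f a := by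
  have hf (c b : ℝ) : Integrable f (ENNReal.ofReal c • Measure.dirac b) :=
    (integrable_dirac enorm_lt_top).smul_measure ENNReal.ofReal_ne_top
  have hnonneg : 0 ≤ 1 / (2 * a ^ 2) := by positivity
  have hle : 1 / a ^ 2 ≤ 1 := (div_le_one (by positivity)).2 (one_le_pow₀ ha)
  rw [XaLaw, integral_add_measure ((hf _ _).add_measure (hf _ _)) (hf _ _),
    integral_add_measure (hf _ _) (hf _ _)]
  simp only [integral_smul_measure, integral_dirac, ENNReal.toReal_ofReal hnonneg,
    ENNReal.toReal_ofReal (sub_nonneg.2 hle)]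

lemma integral_sq_XaLaw {a : ℝ} (ha : 1 ≤ a) : ∫ x, x ^ 2 ∂(XaLaw a) = 1 := by
  have ha0 : a ≠ 0 := by positivity
  rw [integral_XaLaw ha]
  simp only [smul_eq_mul]
  field_simp
  ring

end XaLaw

lemma hasSubgaussianMGF_id_gaussianReal (v : NNReal) :
    HasSubgaussianMGF id v (gaussianReal 0 v) where
  integrable_exp_mul := integrable_exp_mul_gaussianReal
  mgf_le t := by simp [mgf_id_gaussianReal]

theorem Xa_full_power_and_mmse_bound_general {Ω : Type*} [MeasurableSpace Ω] (μ : Measure Ω)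
    [IsProbabilityMeasure μ] (a : ℝ) (ha : 1 ≤ a) (X Z : Ω → ℝ)
    (hX : Measurable X) (hZ : Measurable Z)
    (hXlaw : Measure.map X μ = XaLaw a)
    (hZsub : HasSubgaussianMGF Z 1 μ)
    (hindep : IndepFun X Z μ) :
    (∫ ω, (X ω) ^ 2 ∂μ) = 1 ∧
    ∀ snr : ℝ, 0 ≤ snr →
      mmseS μ X Z snr ≤ min 1 (2 * (a ^ 2 + 1) * Real.exp (-(a ^ 2 * snr / 8))) := by
  have hXa : ∀ᵐ ω ∂μ, X ω ∈ ({-a, 0, a} : Set ℝ) :=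
    ae_of_ae_map hX.aemeasurable (hXlaw ▸ ae_mem_XaLaw a)
  have hpower : ∫ ω, (X ω) ^ 2 ∂μ = 1 := by
    rw [← integral_sq_XaLaw ha, ← hXlaw, integral_map hX.aemeasurable (by fun_prop)]
  refine ⟨hpower, fun snr hsnr => le_min ?_ ?_⟩
  · exact hpower ▸ mmseS_le_integral_sq hX hZ
      (memLp_of_ae_mem_ternary hX.aestronglyMeasurable hXa 2) snr
  · simpa only [hpower, NNReal.coe_one, mul_one] using
      mmseS_le_of_ae_mem_ternary_of_hasSubgaussianMGF (zero_le_one.trans ha) hX hZ hXa hZsub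
        hindep hsnr

/-- **Equation (48) (MMSE bound for the three-point full-power input `X_a`).**
For `a ≥ 1`, `E[X_a²] = 1` and `mmse(X_a, snr) ≤ min(1, 4(a²+1)e^{−a²·snr/8})` for all
`snr > 0`. -/
theorem Xa_full_power_and_mmse_bound {Ω : Type*} [MeasurableSpace Ω] (μ : Measure Ω)
    [IsProbabilityMeasure μ] (a : ℝ) (ha : 1 ≤ a) (X Z : Ω → ℝ)
    (hX : Measurable X) (hZ : Measurable Z)
    (hXlaw : Measure.map X μ = XaLaw a)
    (hZlaw : Measure.map Z μ = gaussianReal 0 1)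
    (hindep : IndepFun X Z μ) :
    (∫ ω, (X ω) ^ 2 ∂μ) = 1 ∧
    ∀ snr : ℝ, 0 < snr →
      mmseS μ X Z snr ≤ min 1 (4 * (a ^ 2 + 1) * Real.exp (-(a ^ 2 * snr / 8))) := by
  have hZsub : HasSubgaussianMGF Z 1 μ :=
    (HasSubgaussianMGF.id_map_iff hZ.aemeasurable).1 (hZlaw ▸ hasSubgaussianMGF_id_gaussianReal 1)
  have ⟨hpower, hmmse⟩ :=
    Xa_full_power_and_mmse_bound_general μ a ha X Z hX hZ hXlaw hZsub hindep
  refine ⟨hpower, fun snr hsnr => (hmmse snr hsnr.le).trans ?_⟩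
  gcongr
  norm_num

end
end
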